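/- arXiv:2301.11996 — 3 statements merged into one kernel-verified Lean document; each statement's English description precedes it below -/
import Mathlib

section
/- Let Ω := {x ∈ ℝ³ : 1 < |x| < 2} be the spherical shell and let χ : ℝ → [0,1] be a smooth cut-off with χ(y) = 1 for |y| ≤ 1 and χ(y) = 0 for |y| ≥ 2. Let F₀ : cl(Ω) → ℝ be continuously differentiable with |∇F₀| ≤ 1 on cl(Ω), let F₁ : cl(Ω) × S² → ℝ be such that x ↦ F₁(x,w) is continuously differentiable with |∇ₓF₁| ≤ 1 for every w, and let Ψ₀ : ∂Ω × S² → ℝ be measurable with |Ψ₀| ≤ 1. For ε ∈ (0,1) define the boundary datum h(x₀,w) := −ε (w·∇F₀)(x₀) − ε² (w·∇ₓF₁)(x₀,w) − χ(ε⁻¹ arcsin(−w·n(x₀))) Ψ₀(x₀,w) on γ₋. Then (∫_{γ₋} |h|² dγ)^{1/2} ≤ C ε for a constant C depending only on Ω (not on ε, F₀, F₁, Ψ₀). -/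
open MeasureTheory Real Set
open scoped RealInnerProductSpace

noncomputable section

abbrev E3 : Type := EuclideanSpace ℝ (Fin 3)
abbrev Sph : Type := Metric.sphere (0 : E3) 1

/-- The surface measure on the unit sphere `S²` (total mass `4π`). -/
def sphμ : Measure Sph := (volume : Measure E3).toSphere

/-- The spherical shell `Ω = {x ∈ ℝ³ : 1 < |x| < 2}`. -/
def Shell : Set E3 := {x : E3 | 1 < ‖x‖ ∧ ‖x‖ < 2}

/-- The outward unit normal on `∂Ω`: `x/2` on `{|x| = 2}` and `-x` on `{|x| = 1}`. -/
def nvec (x : E3) : E3 := if ‖x‖ = 2 then (2:ℝ)⁻¹ • x else -x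

/-- The product measure `dx ⊗ dw` on `Ω × S²`. -/
def bulkμ : Measure (E3 × Sph) := ((volume : Measure E3).restrict Shell).prod sphμ

/-- The measure `dσ(x) ⊗ dw` on `∂Ω × S²`, `σ` the 2-dimensional Hausdorff measure. -/
def bdryμ : Measure (E3 × Sph) := ((μH[2] : Measure E3).restrict (frontier Shell)).prod sphμ

/-- The outgoing boundary `γ₊ = {w · n(x) > 0}`. -/
def gammaPlus : Set (E3 × Sph) := {p : E3 × Sph | 0 < ⟪(p.2 : E3), nvec p.1⟫}

/-- The incoming boundary `γ₋ = {w · n(x) < 0}`. -/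
def gammaMinus : Set (E3 × Sph) := {p : E3 × Sph | ⟪(p.2 : E3), nvec p.1⟫ < 0}

/-- The velocity average `R̄(x) = (1/4π) ∫_{S²} R(x,w) dw`. -/
def vavg (R : E3 → E3 → ℝ) (x : E3) : ℝ := (4 * π)⁻¹ * ∫ w : Sph, R x (w : E3) ∂sphμ

/-- A smooth cut-off function: `0 ≤ χ ≤ 1`, `χ = 1` on `{|y| ≤ 1}`, `χ = 0` on `{|y| ≥ 2}`. -/
def IsCutoff (χ : ℝ → ℝ) : Prop :=
  ContDiff ℝ (⊤ : ℕ∞) χ ∧ (∀ y, χ y ∈ Icc (0:ℝ) 1) ∧ (∀ y, |y| ≤ 1 → χ y = 1) ∧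
    (∀ y, 2 ≤ |y| → χ y = 0)


lemma aux_sphere_fin (r : ℝ) (hr : 0 < r) : (μH[2] : Measure E3) (Metric.sphere (0:E3) r) < ⊤ := by
  let f : (Fin 2 → ℝ) → E3 := fun v =>
    !₂[r * (sin (v 0) * cos (v 1)), r * (sin (v 0) * sin (v 1)), r * cos (v 0)]
  let K : Set (Fin 2 → ℝ) := Icc (fun _ => -π) (fun _ => π)
  have hf : ContDiff ℝ 1 f := by
    rw [contDiff_euclidean]
    intro i
    fin_cases i <;> simp [f] <;> fun_prop
  have hK : IsCompact K := isCompact_Icc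
  have hc : Convex ℝ K := convex_Icc _ _
  obtain ⟨L, hL⟩ := (hf.contDiffOn (s := K)).exists_lipschitzOnWith one_ne_zero hc hK
  have h1 := hL.hausdorffMeasure_image_le (d := 2) (by norm_num)
  have hsub : Metric.sphere (0:E3) r ⊆ f '' K := by
    intro x hx
    have hn : ‖x‖ = r := by simpa using hx
    have hsq : x 0 ^ 2 + x 1 ^ 2 + x 2 ^ 2 = r ^ 2 := by
      rw [← hn, EuclideanSpace.real_norm_sq_eq, Fin.sum_univ_three]
    let z : ℂ := ⟨x 0 / r, x 1 / r⟩
    have hz : ‖z‖ = sin (arccos (x 2 / r)) := by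
      rw [sin_arccos, Complex.norm_def, Complex.normSq_apply]
      congr 1
      simp only [z]
      field_simp
      linarith
    have hb : |x 2 / r| ≤ 1 := by
      rw [abs_div, abs_of_pos hr, div_le_one hr]
      apply abs_le_of_sq_le_sq _ hr.le
      nlinarith [sq_nonneg (x 0), sq_nonneg (x 1)]
    rw [abs_le] at hb
    refine ⟨![arccos (x 2 / r), Complex.arg z], ⟨?_, ?_⟩, ?_⟩
    · intro i
      fin_cases i
      · simp; linarith [arccos_nonneg (x 2 / r), pi_pos]
      · simpa using (Complex.neg_pi_lt_arg z).le
    · intro i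
      fin_cases i
      · simpa using arccos_le_pi _
      · simpa using Complex.arg_le_pi z
    · ext i
      have h1 := Complex.norm_mul_cos_arg z
      have h2 := Complex.norm_mul_sin_arg z
      rw [hz] at h1 h2
      fin_cases i
      · simp only [f]
        simp [h1, z, -sin_arccos]
        field_simp
      · simp only [f]
        simp [h2, z, -sin_arccos]
        field_simp
      · simp only [f]
        simp [cos_arccos hb.1 hb.2]
        field_simp
  refine (measure_mono hsub).trans_lt (h1.trans_lt ?_)
  have : (μH[2] : Measure (Fin 2 → ℝ)) = volume := by
    have := @hausdorffMeasure_pi_real (Fin 2) _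
    simpa using this
  rw [this]
  exact ENNReal.mul_lt_top (by simp) hK.measure_lt_top

lemma aux_frontier : frontier Shell ⊆ Metric.sphere (0:E3) 1 ∪ Metric.sphere (0:E3) 2 := by
  have h1 : IsOpen Shell := by
    apply IsOpen.inter (isOpen_lt continuous_const continuous_norm) (isOpen_lt continuous_norm continuous_const)
  have h2 : closure Shell ⊆ {x : E3 | 1 ≤ ‖x‖ ∧ ‖x‖ ≤ 2} := by
    apply closure_minimal
    · rintro x ⟨h, h'⟩
      exact ⟨h.le, h'.le⟩
    · exact IsClosed.inter (isClosed_le continuous_const continuous_norm) (isClosed_le continuous_norm continuous_const)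
  intro x hx
  rw [h1.frontier_eq] at hx
  obtain ⟨a, b⟩ := h2 hx.1
  have hn := hx.2
  by_contra hh
  simp at hh
  exact hn ⟨lt_of_le_of_ne a (Ne.symm hh.1), lt_of_le_of_ne b hh.2⟩

lemma aux_nvec {x : E3} (hx : x ∈ frontier Shell) : ‖nvec x‖ = 1 := by
  rcases aux_frontier hx with h | h
  · have : ‖x‖ = 1 := by simpa using h
    simp [nvec, this]
  · have : ‖x‖ = 2 := by simpa using h
    simp [nvec, this, norm_smul]

lemma aux_fin : IsFiniteMeasure ((μH[2] : Measure E3).restrict (frontier Shell)) := by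
  refine ⟨?_⟩
  rw [Measure.restrict_apply_univ]
  refine (measure_mono aux_frontier).trans_lt ((measure_union_le _ _).trans_lt ?_)
  exact ENNReal.add_lt_top.2 ⟨aux_sphere_fin 1 one_pos, aux_sphere_fin 2 two_pos⟩

lemma aux_vol (n : E3) (hn : ‖n‖ = 1) (δ : ℝ) :
    volume {x : E3 | ‖x‖ ≤ 1 ∧ |⟪x, n⟫| ≤ δ} ≤ ENNReal.ofReal (8 * δ) := by
  have hv : Orthonormal ℝ (({0} : Set (Fin 3)).domRestrict (fun _ : Fin 3 => n)) := by
    constructor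
    · intro i; simpa using hn
    · intro i j hij; exact absurd (Subsingleton.elim i j) hij
  obtain ⟨b, hb⟩ := hv.exists_orthonormalBasis_extension_of_card_eq (card_ι := by simp)
  have hb0 : b 0 = n := hb 0 (by simp)
  have hm := b.measurePreserving_repr
  have hm2 := (EuclideanSpace.volume_preserving_symm_measurableEquiv_toLp (Fin 3))
  have hm3 := hm2.comp hm
  let B : Set (Fin 3 → ℝ) := Set.pi univ (fun i => if i = 0 then Icc (-δ) δ else Icc (-1) 1)
  have hB : MeasurableSet B := by
    apply MeasurableSet.univ_pi
    intro i
    split_ifs <;> exact measurableSet_Icc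
  have hvB : volume B = ENNReal.ofReal (8 * δ) := by
    rw [volume_pi_pi, Fin.prod_univ_three]
    simp only [if_true, Real.volume_Icc, Fin.isValue, one_ne_zero, if_false, Fin.reduceEq]
    rw [mul_assoc, ← ENNReal.ofReal_mul (by norm_num), ← ENNReal.ofReal_mul' (by norm_num)]
    congr 1
    ring
  rw [← hvB, ← hm3.measure_preimage hB.nullMeasurableSet]
  apply measure_mono
  rintro x ⟨hx1, hx2⟩ i -
  have key : ∀ i, |b.repr x i| ≤ 1 := by
    intro i
    have := PiLp.norm_apply_le (b.repr x) i
    rw [b.repr.norm_map] at this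
    exact this.trans hx1
  by_cases hi : i = 0
  · subst hi
    have : |b.repr x 0| ≤ δ := by
      rwa [b.repr_apply_apply, hb0, real_inner_comm]
    simpa [abs_le] using this
  · simpa [hi, abs_le] using key i

lemma aux_sph (n : E3) (hn : ‖n‖ = 1) (δ : ℝ) :
    sphμ {w : Sph | |⟪(w:E3), n⟫| ≤ δ} ≤ ENNReal.ofReal (24 * δ) := by
  have hms : MeasurableSet {w : Sph | |⟪(w:E3), n⟫| ≤ δ} := by
    apply measurableSet_le _ measurable_const
    fun_prop
  rw [sphμ, Measure.toSphere_apply' _ hms]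
  have : ENNReal.ofReal (24 * δ) = 3 * ENNReal.ofReal (8 * δ) := by
    rw [← ENNReal.ofReal_ofNat 3, ← ENNReal.ofReal_mul (by norm_num)]
    ring_nf
  rw [this]
  simp only [finrank_euclideanSpace, Fintype.card_fin]
  push_cast
  gcongr
  refine (measure_mono ?_).trans (aux_vol n hn δ)
  rintro _ ⟨t, ht, _, ⟨w, hw, rfl⟩, rfl⟩
  have hw1 : ‖(w:E3)‖ = 1 := by simpa using w.2
  have hw' : |⟪(w:E3), n⟫| ≤ δ := hw
  have ht0 : 0 < t := ht.1
  have ht1 : t < 1 := ht.2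
  constructor
  · simp [norm_smul, hw1, abs_of_pos ht0, ht1.le]
  · simp only [inner_smul_left, abs_mul]
    simp [abs_of_pos ht0]
    nlinarith [abs_nonneg ⟪(w:E3), n⟫]

lemma aux_meas : Measurable nvec := by
  unfold nvec
  apply Measurable.ite
  · exact measurableSet_eq_fun measurable_norm measurable_const
  · fun_prop
  · fun_prop

lemma aux_pt2 {ε a b t : ℝ} (h0 : 0 < ε) (h1 : ε < 1) (ha : |a| ≤ 1) (hb : |b| ≤ 1)
    (ht0 : 0 ≤ t) (ht : t ≤ 1) : (-ε * a - ε ^ 2 * b) ^ 2 * t ≤ 6 * ε ^ 2 := by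
  have h2 : |a + ε * b| ≤ 2 := by
    have : |ε * b| ≤ 1 := by
      rw [abs_mul, abs_of_pos h0]; nlinarith [abs_nonneg b]
    linarith [abs_add_le a (ε * b)]
  have h3 : (a + ε * b) ^ 2 ≤ 4 := by
    have := sq_le_sq' (by linarith [(abs_le.1 h2).1]) (abs_le.1 h2).2
    linarith
  have h4 : (a + ε * b) ^ 2 * t ≤ 4 := by nlinarith [sq_nonneg (a + ε * b)]
  have h5 : (-ε * a - ε ^ 2 * b) ^ 2 * t = ε ^ 2 * ((a + ε * b) ^ 2 * t) := by ring
  rw [h5]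
  nlinarith [sq_nonneg ε]

lemma aux_pt1 {ε a b t c ψ : ℝ} (h0 : 0 < ε) (h1 : ε < 1) (ha : |a| ≤ 1) (hb : |b| ≤ 1)
    (hc : c ∈ Icc (0:ℝ) 1) (hψ : |ψ| ≤ 1)
    (ht0 : 0 ≤ t) (ht : t ≤ 1) (ht2 : t ≤ 2 * ε) :
    (-ε * a - ε ^ 2 * b - c * ψ) ^ 2 * t ≤ 6 * ε ^ 2 + 6 * ε := by
  have ha2 : a ^ 2 ≤ 1 := (sq_le_one_iff_abs_le_one a).2 ha
  have hb2 : b ^ 2 ≤ 1 := (sq_le_one_iff_abs_le_one b).2 hb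
  have hcψ : (c * ψ) ^ 2 ≤ 1 := by
    rw [sq_le_one_iff_abs_le_one, abs_mul, abs_of_nonneg hc.1]
    nlinarith [abs_nonneg ψ, hc.1, hc.2]
  have hε4 : (ε ^ 2) ^ 2 ≤ ε ^ 2 := by
    have : ε ^ 2 ≤ 1 := by nlinarith
    nlinarith [sq_nonneg ε]
  have e1 : (ε * a) ^ 2 ≤ ε ^ 2 := by rw [mul_pow]; nlinarith [sq_nonneg ε]
  have e2 : (ε ^ 2 * b) ^ 2 ≤ ε ^ 2 := by rw [mul_pow]; nlinarith [sq_nonneg (ε ^ 2)]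
  have e3 : (-ε * a - ε ^ 2 * b - c * ψ) ^ 2 ≤
      3 * ((ε * a) ^ 2 + (ε ^ 2 * b) ^ 2 + (c * ψ) ^ 2) := by
    nlinarith [sq_nonneg (ε * a - ε ^ 2 * b), sq_nonneg (ε * a - c * ψ),
      sq_nonneg (ε ^ 2 * b - c * ψ)]
  have e4 : (-ε * a - ε ^ 2 * b - c * ψ) ^ 2 ≤ 6 * ε ^ 2 + 3 := by linarith
  calc _ ≤ (6 * ε ^ 2 + 3) * t := by gcongr
    _ ≤ _ := by nlinarith [sq_nonneg ε]

/-- The boundary datum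
`h = −ε w·∇F₀ − ε² w·∇ₓF₁ − χ(ε⁻¹ arcsin(−w·n)) Ψ₀` satisfies `‖h‖_{L²(γ₋)} ≤ C ε`. -/
theorem boundary_data_estimate :
    ∃ C > (0:ℝ), ∀ χ : ℝ → ℝ, IsCutoff χ →
      ∀ F₀ : E3 → ℝ, ∀ F₁ Ψ₀ : E3 → E3 → ℝ, ∀ ε ∈ Ioo (0:ℝ) 1,
      ContDiffOn ℝ 1 F₀ (closure Shell) →
      (∀ x ∈ closure Shell, ‖fderivWithin ℝ F₀ (closure Shell) x‖ ≤ 1) →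
      (∀ w : E3, ‖w‖ = 1 → ContDiffOn ℝ 1 (fun x => F₁ x w) (closure Shell)) →
      (∀ w : E3, ‖w‖ = 1 → ∀ x ∈ closure Shell,
        ‖fderivWithin ℝ (fun x => F₁ x w) (closure Shell) x‖ ≤ 1) →
      Measurable (fun p : E3 × Sph => Ψ₀ p.1 (p.2 : E3)) →
      (∀ x w : E3, |Ψ₀ x w| ≤ 1) →
      Real.sqrt (∫ p in gammaMinus,
          (-ε * fderivWithin ℝ F₀ (closure Shell) p.1 (p.2 : E3)
            - ε^2 * fderivWithin ℝ (fun x => F₁ x (p.2 : E3)) (closure Shell) p.1 (p.2 : E3)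
            - χ (ε⁻¹ * Real.arcsin (-⟪(p.2 : E3), nvec p.1⟫)) * Ψ₀ p.1 (p.2 : E3))^2
          * |⟪(p.2 : E3), nvec p.1⟫| ∂bdryμ) ≤ C * ε := by
  haveI := aux_fin
  haveI hsf : IsFiniteMeasure sphμ := by unfold sphμ; infer_instance
  haveI hbf : IsFiniteMeasure bdryμ := by unfold bdryμ; infer_instance
  set M : ℝ := ((μH[2] : Measure E3).restrict (frontier Shell)).real univ with hM
  have hM0 : 0 ≤ M := measureReal_nonneg
  set T : ℝ := bdryμ.real univ with hT
  have hT0 : 0 ≤ T := measureReal_nonneg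
  refine ⟨Real.sqrt (6 * T + 288 * M) + 1, by positivity, ?_⟩
  intro χ hχ F₀ F₁ Ψ₀ ε hε _ hF₀ _ hF₁ _ hΨ
  obtain ⟨hε0, hε1⟩ := hε
  have hC : Real.sqrt (6 * T + 288 * M) * ε ≤ (Real.sqrt (6 * T + 288 * M) + 1) * ε := by
    nlinarith
  refine le_trans ?_ hC
  apply Real.sqrt_le_iff.2
  refine ⟨by positivity, ?_⟩
  rw [mul_pow, Real.sq_sqrt (by positivity)]
  set A : Set (E3 × Sph) := {p | |⟪(p.2 : E3), nvec p.1⟫| ≤ 2 * ε} with hA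
  have hAm : MeasurableSet A := by
    apply measurableSet_le _ measurable_const
    have := aux_meas
    fun_prop
  let g : E3 × Sph → ℝ := fun p => 6 * ε ^ 2 + A.indicator (fun _ => 6 * ε) p
  have hgi1 : Integrable (A.indicator (fun _ => 6 * ε)) bdryμ :=
    (integrable_const _).indicator hAm
  have hgi : Integrable g bdryμ := (integrable_const _).add hgi1
  have hg0 : ∀ p, 0 ≤ g p := by
    intro p
    have : 0 ≤ A.indicator (fun _ => 6 * ε) p := indicator_nonneg (fun _ _ => by positivity) p
    positivity
  have hfr : ∀ᵐ p ∂bdryμ, p.1 ∈ frontier Shell := by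
    have h1 : ∀ᵐ x ∂((μH[2] : Measure E3).restrict (frontier Shell)), x ∈ frontier Shell :=
      ae_restrict_mem isClosed_frontier.measurableSet
    exact Measure.quasiMeasurePreserving_fst.ae h1
  have hAe : bdryμ.real A ≤ 48 * ε * M := by
    have h1 : bdryμ A ≤ ENNReal.ofReal (24 * (2 * ε)) *
        ((μH[2] : Measure E3).restrict (frontier Shell)) univ := by
      unfold bdryμ
      rw [Measure.prod_apply hAm, ← lintegral_const]
      apply lintegral_mono_ae
      filter_upwards [ae_restrict_mem isClosed_frontier.measurableSet] with x hx
      exact aux_sph (nvec x) (aux_nvec hx) (2 * ε)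
    have h2 := ENNReal.toReal_mono (ENNReal.mul_ne_top ENNReal.ofReal_ne_top (measure_ne_top _ _)) h1
    rw [ENNReal.toReal_mul, ENNReal.toReal_ofReal (by positivity)] at h2
    rw [hM, measureReal_def, measureReal_def]
    linarith
  calc _ ≤ ∫ p in gammaMinus, g p ∂bdryμ := by
        apply integral_mono_of_nonneg
        · exact Filter.Eventually.of_forall fun p => by positivity
        · exact hgi.integrableOn
        · apply ae_restrict_of_ae
          filter_upwards [hfr] with p hp
          have hcl := frontier_subset_closure hp
          have hw : ‖(p.2 : E3)‖ = 1 := by simpa using p.2.2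
          have ha : |fderivWithin ℝ F₀ (closure Shell) p.1 (p.2 : E3)| ≤ 1 := by
            have := ContinuousLinearMap.le_of_opNorm_le _ (hF₀ _ hcl) (p.2 : E3)
            simpa [hw] using this
          have hb : |fderivWithin ℝ (fun x => F₁ x (p.2 : E3)) (closure Shell) p.1 (p.2 : E3)| ≤ 1 := by
            have := ContinuousLinearMap.le_of_opNorm_le _ (hF₁ _ hw _ hcl) (p.2 : E3)
            simpa [hw] using this
          have ht : |⟪(p.2 : E3), nvec p.1⟫| ≤ 1 := by
            have := abs_real_inner_le_norm (p.2 : E3) (nvec p.1)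
            rwa [hw, aux_nvec hp, one_mul] at this
          have hψ := hΨ p.1 p.2
          have hAp : p ∈ A ↔ |⟪(p.2 : E3), nvec p.1⟫| ≤ 2 * ε := Iff.rfl
          simp only [g]
          by_cases hpA : p ∈ A
          · rw [indicator_of_mem hpA]
            exact aux_pt1 hε0 hε1 ha hb (hχ.2.1 _) hψ (abs_nonneg _) ht (hAp.1 hpA)
          · rw [indicator_of_notMem hpA]
            have hz : χ (ε⁻¹ * Real.arcsin (-⟪(p.2 : E3), nvec p.1⟫)) = 0 := by
              apply hχ.2.2.2
              rw [hAp, not_le] at hpA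
              have h1 : |⟪(p.2 : E3), nvec p.1⟫| ≤ |Real.arcsin (-⟪(p.2 : E3), nvec p.1⟫)| := by
                have h := @Real.abs_sin_le_abs (Real.arcsin (-⟪(p.2 : E3), nvec p.1⟫))
                rw [abs_le] at ht
                rwa [Real.sin_arcsin (by linarith) (by linarith), abs_neg] at h
              rw [abs_mul, abs_of_pos (inv_pos.2 hε0), inv_mul_eq_div, le_div_iff₀ hε0]
              linarith
            rw [hz, zero_mul, sub_zero, add_zero]
            exact aux_pt2 hε0 hε1 ha hb (abs_nonneg _) ht
    _ ≤ ∫ p, g p ∂bdryμ := setIntegral_le_integral hgi (Filter.Eventually.of_forall hg0)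
    _ = 6 * ε ^ 2 * T + 6 * ε * bdryμ.real A := by
        simp only [g]
        rw [integral_add (integrable_const _) hgi1, integral_indicator_const _ hAm, integral_const]
        simp only [smul_eq_mul]
        rw [hT]; ring
    _ ≤ 6 * ε ^ 2 * T + 6 * ε * (48 * ε * M) := by gcongr
    _ = _ := by ring
end
end

section
/- Let K > 0, A > 0, and ε ∈ (0,1). Let Ψ : [0,∞) × (−π/2,π/2) × (−π,π) → ℝ be continuously differentiable in φ with |Ψ(η,φ,ψ)| ≤ e^{−Kη} for all (η,φ,ψ) and |∂_φΨ(η,φ,ψ)| ≤ |sinφ|⁻¹ e^{−Kη} for all φ ≠ 0, and let a : [0,∞) × (−π,π) → ℝ be measurable with |a| ≤ A. Define the cut-off boundary layer U(η,φ,ψ) := χ̃(ε⁻¹φ) χ(εη) Ψ(η,φ,ψ) and the source term S₁(η,φ,ψ) := a(η,ψ) cosφ · ∂_φU(η,φ,ψ). Then ( ε ∫₀^∞ ∫_{−π/2}^{π/2} ∫_{−π}^{π} (1+η)² |S₁(η,φ,ψ)|² cosφ dψ dφ dη )^{1/2} ≤ C, where C depends only on K and A (not on ε or Ψ). -/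
open MeasureTheory Real Set

noncomputable section

/-- The cut-off boundary layer `U = χ̃(ε⁻¹φ) χ(εη) Ψ(η,φ,ψ)`, where `χ̃ = 1 - χ`. -/
def cutU (χ : ℝ → ℝ) (ε : ℝ) (Ψ : ℝ → ℝ → ℝ → ℝ) (η φ ψ : ℝ) : ℝ :=
  (1 - χ (ε⁻¹ * φ)) * χ (ε * η) * Ψ η φ ψ

/-- The source term `S₁ = a(η,ψ) cos φ ∂_φ U`. -/
def S1 (χ : ℝ → ℝ) (ε : ℝ) (Ψ : ℝ → ℝ → ℝ → ℝ) (a : ℝ → ℝ → ℝ) (η φ ψ : ℝ) : ℝ :=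
  a η ψ * Real.cos φ * deriv (fun s => cutU χ ε Ψ η s ψ) φ

lemma cutoff_deriv_bound (χ : ℝ → ℝ) (hχ : IsCutoff χ) :
    ∃ M > (0:ℝ), ∀ y, |y| * |deriv χ y| ≤ M := by
  obtain ⟨hs, -, -, h0⟩ := hχ
  have hc : Continuous (deriv χ) := hs.continuous_deriv (by simp)
  obtain ⟨M, hM⟩ := (isCompact_Icc (a := (-2:ℝ)) (b := 2)).exists_bound_of_continuousOn
    hc.continuousOn
  refine ⟨2 * |M| + 1, by positivity, fun y => ?_⟩
  by_cases hy : |y| ≤ 2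
  · have h1 := hM y (abs_le.mp hy)
    rw [Real.norm_eq_abs] at h1
    have h2 : |deriv χ y| ≤ |M| := h1.trans (le_abs_self _)
    have := mul_le_mul hy h2 (abs_nonneg _) (by norm_num)
    linarith
  · push Not at hy
    have : χ =ᶠ[nhds y] fun _ => 0 := by
      have : ∀ᶠ z in nhds y, 2 < |z| := continuous_abs.continuousAt.eventually (lt_mem_nhds hy)
      filter_upwards [this] with z hz using h0 z hz.le
    rw [this.deriv_eq]
    simp
    positivity

lemma deriv_bound_zero (χ : ℝ → ℝ) (hχ : IsCutoff χ) (ε : ℝ) (hε : 0 < ε)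
    (Ψ : ℝ → ℝ → ℝ → ℝ) (η φ ψ : ℝ) (h : |φ| < ε) :
    deriv (fun s => cutU χ ε Ψ η s ψ) φ = 0 := by
  have : (fun s => cutU χ ε Ψ η s ψ) =ᶠ[nhds φ] fun _ => 0 := by
    have : ∀ᶠ z in nhds φ, |z| < ε := continuous_abs.continuousAt.eventually (gt_mem_nhds h)
    filter_upwards [this] with z hz
    have : χ (ε⁻¹ * z) = 1 := by
      apply hχ.2.2.1
      rw [abs_mul, abs_of_pos (inv_pos.2 hε), inv_mul_le_iff₀ hε]
      linarith
    simp [cutU, this]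
  rw [this.deriv_eq]
  simp

lemma deriv_bound_main (χ : ℝ → ℝ) (hχ : IsCutoff χ) (M : ℝ)
    (hM : ∀ y, |y| * |deriv χ y| ≤ M) (ε : ℝ) (hε : 0 < ε)
    (Ψ : ℝ → ℝ → ℝ → ℝ) (η φ ψ E : ℝ) (hφ : φ ∈ Ioo (-(π/2)) (π/2)) (h0 : φ ≠ 0)
    (hd : ContDiffOn ℝ 1 (fun φ => Ψ η φ ψ) (Ioo (-(π/2)) (π/2)))
    (h1 : |Ψ η φ ψ| ≤ E) (h2 : |deriv (fun s => Ψ η s ψ) φ| ≤ |Real.sin φ|⁻¹ * E) :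
    |deriv (fun s => cutU χ ε Ψ η s ψ) φ| ≤ (M + π / 2) * |φ|⁻¹ * E := by
  have hE : 0 ≤ E := (abs_nonneg _).trans h1
  have hp : 0 < |φ| := abs_pos.2 h0
  have hM0 : 0 ≤ M := (mul_nonneg (abs_nonneg _) (abs_nonneg _)).trans (hM 0)
  have hΨ : HasDerivAt (fun s => Ψ η s ψ) (deriv (fun s => Ψ η s ψ) φ) φ :=
    ((hd.differentiableOn (by norm_num)).differentiableAt (isOpen_Ioo.mem_nhds hφ)).hasDerivAt
  have hχd : HasDerivAt χ (deriv χ (ε⁻¹ * φ)) (ε⁻¹ * φ) :=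
    (hχ.1.differentiable (by simp)).differentiableAt.hasDerivAt
  have hl : HasDerivAt (fun s : ℝ => ε⁻¹ * s) ε⁻¹ φ := by
    simpa using (hasDerivAt_id φ).const_mul ε⁻¹
  have hc := hχd.comp φ hl
  have hU := ((hc.const_sub 1).mul_const (χ (ε * η))).mul hΨ
  have hU' : deriv (fun s => cutU χ ε Ψ η s ψ) φ = _ := hU.deriv
  rw [hU']
  simp only [Function.comp]
  obtain ⟨a0, a1⟩ := hχ.2.1 (ε⁻¹ * φ)
  obtain ⟨b0, b1⟩ := hχ.2.1 (ε * η)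
  have hD : |deriv χ (ε⁻¹ * φ) * ε⁻¹| ≤ M * |φ|⁻¹ := by
    rw [← div_eq_mul_inv M, le_div_iff₀ hp]
    have := hM (ε⁻¹ * φ)
    rw [abs_mul] at this
    rw [abs_mul]
    linarith
  have hs : |Real.sin φ|⁻¹ ≤ π / 2 * |φ|⁻¹ := by
    have := Real.mul_abs_le_abs_sin (x := φ) (abs_le.2 ⟨hφ.1.le, hφ.2.le⟩)
    have hpi := Real.pi_pos
    calc |Real.sin φ|⁻¹ ≤ (2 / π * |φ|)⁻¹ := inv_anti₀ (by positivity) this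
      _ = _ := by field_simp
  have hb : |χ (ε * η)| ≤ 1 := abs_le.2 ⟨by linarith, b1⟩
  have ha : |1 - χ (ε⁻¹ * φ)| ≤ 1 := abs_le.2 ⟨by linarith, by linarith⟩
  refine (abs_add_le _ _).trans ?_
  have t1 : |-(deriv χ (ε⁻¹ * φ) * ε⁻¹) * χ (ε * η) * Ψ η φ ψ| ≤ M * |φ|⁻¹ * 1 * E := by
    rw [abs_mul, abs_mul, abs_neg]
    gcongr
  have t2 : |(1 - χ (ε⁻¹ * φ)) * χ (ε * η) * deriv (fun s => Ψ η s ψ) φ|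
      ≤ 1 * 1 * (π / 2 * |φ|⁻¹ * E) := by
    rw [abs_mul, abs_mul]
    gcongr
    exact h2.trans (by gcongr)
  linarith

lemma weight_bound (K η : ℝ) (hK : 0 < K) (hη : 0 ≤ η) :
    (1+η)^2 * (Real.exp (-K * η))^2 ≤ (1 + 2 / K)^2 * Real.exp (-K * η) := by
  have h := Real.add_one_le_exp (K * η / 2)
  have h1 : 1 + η ≤ (1 + 2 / K) * Real.exp (K * η / 2) := by
    have : (1 + 2 / K) * (K * η / 2 + 1) ≤ (1 + 2 / K) * Real.exp (K * η / 2) := by gcongr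
    have e : (1 + 2 / K) * (K * η / 2 + 1) = 1 + η + K * η / 2 + 2 / K := by field_simp; ring
    have : 0 ≤ K * η / 2 + 2 / K := by positivity
    linarith
  calc (1+η)^2 * (Real.exp (-K * η))^2
      ≤ ((1 + 2 / K) * Real.exp (K * η / 2))^2 * (Real.exp (-K * η))^2 := by gcongr
    _ = _ := by
      rw [mul_pow, mul_assoc, ← Real.exp_nat_mul, ← Real.exp_nat_mul, ← Real.exp_add]
      congr 2
      push_cast
      ring

/-- Weighted `L²` bound for the source term `S₁`. -/
theorem s1_L2_bound (χ : ℝ → ℝ) (hχ : IsCutoff χ) (K A : ℝ) (hK : 0 < K) (hA : 0 < A) :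
    ∃ C > (0:ℝ), ∀ ε ∈ Ioo (0:ℝ) 1, ∀ Ψ : ℝ → ℝ → ℝ → ℝ, ∀ a : ℝ → ℝ → ℝ,
      (∀ η ψ : ℝ, ContDiffOn ℝ 1 (fun φ => Ψ η φ ψ) (Ioo (-(π/2)) (π/2))) →
      (∀ η ≥ (0:ℝ), ∀ φ ∈ Ioo (-(π/2)) (π/2), ∀ ψ ∈ Ioo (-π) π,
        |Ψ η φ ψ| ≤ Real.exp (-K * η)) →
      (∀ η ≥ (0:ℝ), ∀ φ ∈ Ioo (-(π/2)) (π/2), φ ≠ 0 → ∀ ψ ∈ Ioo (-π) π,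
        |deriv (fun s => Ψ η s ψ) φ| ≤ |Real.sin φ|⁻¹ * Real.exp (-K * η)) →
      Measurable (fun p : ℝ × ℝ => a p.1 p.2) →
      (∀ η ψ : ℝ, |a η ψ| ≤ A) →
      Real.sqrt (ε * ∫ η in Ioi (0:ℝ), ∫ φ in Ioo (-(π/2)) (π/2), ∫ ψ in Ioo (-π) π,
        (1+η)^2 * (S1 χ ε Ψ a η φ ψ)^2 * Real.cos φ) ≤ C := by
  obtain ⟨M, hM0, hM⟩ := cutoff_deriv_bound χ hχ
  have hpi := Real.pi_pos
  set Q : ℝ := (1 + 2 / K)^2 * A^2 * (M + π/2)^2 * 2 with hQ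
  have hQ0 : 0 < Q := by positivity
  refine ⟨Real.sqrt (Q * (2 * π) * π * K⁻¹) , by positivity, ?_⟩
  rintro ε ⟨hε, hε1⟩ Ψ a hd h1 h2 - ha
  apply Real.sqrt_le_sqrt
  have key : ∀ η > (0:ℝ), ∀ φ ∈ Ioo (-(π/2)) (π/2), ∀ ψ ∈ Ioo (-π) π,
      (1+η)^2 * (S1 χ ε Ψ a η φ ψ)^2 * Real.cos φ ≤
        Q * Real.exp (-K * η) * (ε⁻¹^2 * (1 + (ε⁻¹ * φ)^2)⁻¹) := by
    intro η hη φ hφ ψ hψ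
    have hc0 := Real.cos_nonneg_of_mem_Icc (Ioo_subset_Icc_self hφ)
    have hc1 := Real.cos_le_one φ
    by_cases hlt : |φ| < ε
    · simp only [S1, deriv_bound_zero χ hχ ε hε Ψ η φ ψ hlt]
      simp only [mul_zero, zero_pow two_ne_zero, zero_mul]
      positivity
    · push Not at hlt
      have hφ0 : φ ≠ 0 := by
        rintro rfl
        simp at hlt
        linarith
      have hp : 0 < |φ| := abs_pos.2 hφ0
      have hb := deriv_bound_main χ hχ M hM ε hε Ψ η φ ψ _ hφ hφ0 (hd η ψ)
        (h1 η hη.le φ hφ ψ hψ) (h2 η hη.le φ hφ hφ0 ψ hψ)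
      have hS : |S1 χ ε Ψ a η φ ψ| ≤ A * 1 * ((M + π / 2) * |φ|⁻¹ * Real.exp (-K * η)) := by
        rw [S1, abs_mul, abs_mul, abs_of_nonneg hc0]
        gcongr
        exact ha η ψ
      have hS2 : (S1 χ ε Ψ a η φ ψ)^2 ≤
          (A * 1 * ((M + π / 2) * |φ|⁻¹ * Real.exp (-K * η)))^2 := by
        rw [← sq_abs]
        gcongr
      have hinv : |φ|⁻¹^2 ≤ 2 * (ε⁻¹^2 * (1 + (ε⁻¹ * φ)^2)⁻¹) := by
        have e : 2 * (ε⁻¹^2 * (1 + (ε⁻¹ * φ)^2)⁻¹) = 2 / (ε^2 + φ^2) := by field_simp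
        have hle : ε^2 ≤ φ^2 := by
          rw [← sq_abs φ]
          gcongr
        rw [e, inv_pow, sq_abs, ← one_div, div_le_div_iff₀ (by positivity) (by positivity)]
        linarith
      calc (1+η)^2 * (S1 χ ε Ψ a η φ ψ)^2 * Real.cos φ
          ≤ (1+η)^2 * (A * 1 * ((M + π / 2) * |φ|⁻¹ * Real.exp (-K * η)))^2 * 1 := by gcongr
        _ = ((1+η)^2 * (Real.exp (-K * η))^2) * (A^2 * (M + π/2)^2) * |φ|⁻¹^2 := by ring
        _ ≤ ((1 + 2 / K)^2 * Real.exp (-K * η)) * (A^2 * (M + π/2)^2) *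
            (2 * (ε⁻¹^2 * (1 + (ε⁻¹ * φ)^2)⁻¹)) := by
          gcongr ?_ * _ * ?_
          exact weight_bound K η hK hη.le
        _ = _ := by rw [hQ]; ring
  have nn : ∀ η, ∀ φ ∈ Ioo (-(π/2)) (π/2), ∀ ψ,
      0 ≤ (1+η)^2 * (S1 χ ε Ψ a η φ ψ)^2 * Real.cos φ := by
    intro η φ hφ ψ
    have hc0 := Real.cos_nonneg_of_mem_Icc (Ioo_subset_Icc_self hφ)
    positivity
  have nn2 : ∀ η, ∀ φ ∈ Ioo (-(π/2)) (π/2),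
      0 ≤ ∫ ψ in Ioo (-π) π, (1+η)^2 * (S1 χ ε Ψ a η φ ψ)^2 * Real.cos φ :=
    fun η φ hφ => integral_nonneg (nn η φ hφ)
  have nn3 : ∀ η, 0 ≤ ∫ φ in Ioo (-(π/2)) (π/2), ∫ ψ in Ioo (-π) π,
      (1+η)^2 * (S1 χ ε Ψ a η φ ψ)^2 * Real.cos φ :=
    fun η => setIntegral_nonneg measurableSet_Ioo (nn2 η)
  have s1 : ∀ η > (0:ℝ), ∀ φ ∈ Ioo (-(π/2)) (π/2),
      ∫ ψ in Ioo (-π) π, (1+η)^2 * (S1 χ ε Ψ a η φ ψ)^2 * Real.cos φ ≤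
        Q * (2 * π) * Real.exp (-K * η) * ε⁻¹^2 * (1 + (ε⁻¹ * φ)^2)⁻¹ := by
    intro η hη φ hφ
    calc _ ≤ ∫ ψ in Ioo (-π) π, Q * Real.exp (-K * η) * (ε⁻¹^2 * (1 + (ε⁻¹ * φ)^2)⁻¹) := by
          refine integral_mono_of_nonneg (ae_of_all _ (nn η φ hφ)) (integrable_const _) ?_
          exact (ae_restrict_iff' measurableSet_Ioo).2 (ae_of_all _ (key η hη φ hφ))
      _ = _ := by
          rw [setIntegral_const, measureReal_def, Real.volume_Ioo,
            ENNReal.toReal_ofReal (by linarith), smul_eq_mul]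
          ring
  have hint : Integrable (fun φ : ℝ => (1 + (ε⁻¹ * φ)^2)⁻¹) :=
    integrable_inv_one_add_sq.comp_mul_left' (inv_ne_zero hε.ne')
  have hval : ∫ φ : ℝ, (1 + (ε⁻¹ * φ)^2)⁻¹ = ε * π := by
    have := Measure.integral_comp_mul_left (fun x : ℝ => (1 + x^2)⁻¹) ε⁻¹
    rw [this, integral_univ_inv_one_add_sq, inv_inv, abs_of_pos hε, smul_eq_mul]
  have s2 : ∀ η > (0:ℝ), ∫ φ in Ioo (-(π/2)) (π/2), ∫ ψ in Ioo (-π) π,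
      (1+η)^2 * (S1 χ ε Ψ a η φ ψ)^2 * Real.cos φ ≤
        Q * (2 * π) * π * ε⁻¹ * Real.exp (-K * η) := by
    intro η hη
    calc _ ≤ ∫ φ in Ioo (-(π/2)) (π/2),
          Q * (2 * π) * Real.exp (-K * η) * ε⁻¹^2 * (1 + (ε⁻¹ * φ)^2)⁻¹ := by
          refine integral_mono_of_nonneg
            ((ae_restrict_iff' measurableSet_Ioo).2 (ae_of_all _ (nn2 η)))
            (hint.const_mul _).integrableOn ?_
          exact (ae_restrict_iff' measurableSet_Ioo).2 (ae_of_all _ (s1 η hη))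
      _ ≤ ∫ φ, Q * (2 * π) * Real.exp (-K * η) * ε⁻¹^2 * (1 + (ε⁻¹ * φ)^2)⁻¹ := by
          refine setIntegral_le_integral (hint.const_mul _) (ae_of_all _ fun φ => ?_)
          simp only [Pi.zero_apply]
          positivity
      _ = _ := by
          rw [integral_const_mul, hval]
          field_simp
  have hexp : IntegrableOn (fun η : ℝ => Real.exp (-K * η)) (Ioi 0) :=
    integrableOn_exp_mul_Ioi (by linarith) 0
  have s3 : ∫ η in Ioi (0:ℝ), ∫ φ in Ioo (-(π/2)) (π/2), ∫ ψ in Ioo (-π) π,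
      (1+η)^2 * (S1 χ ε Ψ a η φ ψ)^2 * Real.cos φ ≤ Q * (2 * π) * π * ε⁻¹ * K⁻¹ := by
    calc _ ≤ ∫ η in Ioi (0:ℝ), Q * (2 * π) * π * ε⁻¹ * Real.exp (-K * η) := by
          refine integral_mono_of_nonneg (ae_of_all _ nn3) (hexp.const_mul _) ?_
          exact (ae_restrict_iff' measurableSet_Ioi).2 (ae_of_all _ s2)
      _ = _ := by
          rw [integral_const_mul, integral_exp_mul_Ioi (by linarith)]
          simp
  calc _ ≤ ε * (Q * (2 * π) * π * ε⁻¹ * K⁻¹) := by gcongr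
    _ = _ := by field_simp
end
end

section
/- Let K > 0 and ε ∈ (0,1). Let Ψ : [0,∞) × (−π/2,π/2) × (−π,π) → ℝ be measurable with |Ψ(η,φ,ψ)| ≤ e^{−Kη}, and set Ψ̄(η) := (1/4π) ∫_{−π/2}^{π/2} ∫_{−π}^{π} Ψ(η,φ′,ψ′) cosφ′ dψ′ dφ′. Define S₃(η,φ,ψ) := ε⁻¹ [ (1/4π) ∫_{−π/2}^{π/2} ∫_{−π}^{π} χ̃(ε⁻¹φ′) χ(εη) Ψ(η,φ′,ψ′) cosφ′ dψ′ dφ′ − Ψ̄(η) χ̃(ε⁻¹φ) χ(εη) ]. Then ( ε ∫₀^∞ ∫_{−π/2}^{π/2} ∫_{−π}^{π} (1+η)² |S₃|² cosφ dψ dφ dη )^{1/2} ≤ C and ( ε ∫₀^∞ (1+η)² ( ∫_{−π/2}^{π/2} ∫_{−π}^{π} |S₃| cosφ dψ dφ )² dη )^{1/2} ≤ C ε^{1/2}, where C depends only on K (not on ε or Ψ). -/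
open MeasureTheory Real Set

noncomputable section

lemma aux_bound {S : Set ℝ} (hS : MeasurableSet S) {f g : ℝ → ℝ} (hg : IntegrableOn g S)
    (h0 : ∀ x ∈ S, 0 ≤ f x) (h : ∀ x ∈ S, f x ≤ g x) :
    ∫ x in S, f x ≤ ∫ x in S, g x := by
  apply integral_mono_of_nonneg
  · exact (ae_restrict_iff' hS).2 (Filter.Eventually.of_forall h0)
  · exact hg
  · exact (ae_restrict_iff' hS).2 (Filter.Eventually.of_forall h)

lemma int_psi (c : ℝ) : ∫ _ in Ioo (-π) π, c = 2 * π * c := by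
  have := Real.pi_pos
  rw [setIntegral_const, smul_eq_mul, Measure.real, Real.volume_Ioo,
    ENNReal.toReal_ofReal (by linarith)]
  ring

lemma int_phi (c : ℝ) : ∫ _ in Ioo (-(π/2)) (π/2), c = π * c := by
  have := Real.pi_pos
  rw [setIntegral_const, smul_eq_mul, Measure.real, Real.volume_Ioo,
    ENNReal.toReal_ofReal (by linarith)]
  ring

lemma intOn_const (a b c : ℝ) : IntegrableOn (fun _ : ℝ => c) (Ioo a b) :=
  integrableOn_const (by simp)

lemma w_int (χ : ℝ → ℝ) (hχ : IsCutoff χ) (ε : ℝ) :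
    IntegrableOn (fun φ => χ (ε⁻¹ * φ)) (Ioo (-(π/2)) (π/2)) := by
  have hc : Continuous (fun φ => χ (ε⁻¹ * φ)) := hχ.1.continuous.comp (by fun_prop)
  exact (hc.integrableOn_Icc).mono_set Ioo_subset_Icc_self

lemma w_bound (χ : ℝ → ℝ) (hχ : IsCutoff χ) (ε : ℝ) (hε : 0 < ε) :
    ∫ φ in Ioo (-(π/2)) (π/2), χ (ε⁻¹ * φ) ≤ 4 * ε := by
  have hw : ∀ φ, χ (ε⁻¹ * φ) ≤ (Icc (-(2*ε)) (2*ε)).indicator (fun _ => (1:ℝ)) φ := by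
    intro φ
    by_cases h : φ ∈ Icc (-(2*ε)) (2*ε)
    · rw [indicator_of_mem h]; exact (hχ.2.1 _).2
    · rw [indicator_of_notMem h]
      apply le_of_eq
      apply hχ.2.2.2
      rw [abs_mul, abs_of_pos (inv_pos.2 hε), inv_mul_eq_div, le_div_iff₀ hε]
      by_contra h2
      exact h (abs_le.1 (le_of_lt (not_le.1 h2)))
  have hi : Integrable ((Icc (-(2*ε)) (2*ε)).indicator (fun _ => (1:ℝ))) :=
    (integrable_indicator_iff measurableSet_Icc).2 (integrableOn_const (by simp))
  calc _ ≤ ∫ φ in Ioo (-(π/2)) (π/2), (Icc (-(2*ε)) (2*ε)).indicator (fun _ => (1:ℝ)) φ :=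
        aux_bound measurableSet_Ioo hi.integrableOn (fun x _ => (hχ.2.1 _).1) (fun x _ => hw x)
    _ ≤ ∫ φ, (Icc (-(2*ε)) (2*ε)).indicator (fun _ => (1:ℝ)) φ :=
        setIntegral_le_integral hi
          (Filter.Eventually.of_forall fun x => indicator_nonneg (fun _ _ => zero_le_one) x)
    _ = 4 * ε := by
        rw [integral_indicator measurableSet_Icc, setIntegral_const, smul_eq_mul, Measure.real,
          Real.volume_Icc, ENNReal.toReal_ofReal (by linarith)]
        ring

lemma s3_pt (χ : ℝ → ℝ) (hχ : IsCutoff χ) (ε : ℝ) (hε : 0 < ε) (E : ℝ) (η : ℝ)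
    (P : ℝ → ℝ → ℝ) (hP : Measurable (fun p : ℝ × ℝ => P p.1 p.2))
    (hE : ∀ φ ∈ Ioo (-(π/2)) (π/2), ∀ ψ ∈ Ioo (-π) π, |P φ ψ| ≤ E) (hE0 : 0 ≤ E) (φ : ℝ) :
    |ε⁻¹ * ((4*π)⁻¹ * (∫ φ' in Ioo (-(π/2)) (π/2), ∫ ψ' in Ioo (-π) π,
            (1 - χ (ε⁻¹ * φ')) * χ (ε * η) * P φ' ψ' * Real.cos φ')
          - ((4*π)⁻¹ * ∫ φ' in Ioo (-(π/2)) (π/2), ∫ ψ' in Ioo (-π) π,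
              P φ' ψ' * Real.cos φ') * (1 - χ (ε⁻¹ * φ)) * χ (ε * η))|
      ≤ E * (2 * ε⁻¹ * χ (ε⁻¹ * φ) + 2) := by
  have hpi := Real.pi_pos
  set g : ℝ → ℝ := fun φ => (∫ ψ' in Ioo (-π) π, P φ ψ') * Real.cos φ with hg
  have e1 : ∀ φ', ∫ ψ' in Ioo (-π) π, (1 - χ (ε⁻¹ * φ')) * χ (ε * η) * P φ' ψ' * Real.cos φ'
      = χ (ε * η) * (g φ' - χ (ε⁻¹ * φ') * g φ') := by
    intro φ'
    rw [integral_mul_const, integral_const_mul, hg]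
    ring
  have e2 : ∀ φ', ∫ ψ' in Ioo (-π) π, P φ' ψ' * Real.cos φ' = g φ' := by
    intro φ'
    rw [integral_mul_const]
  have hgm : Measurable g := by
    have : StronglyMeasurable (fun φ => ∫ ψ' in Ioo (-π) π, P φ ψ') :=
      hP.stronglyMeasurable.integral_prod_right
    exact this.measurable.mul Real.measurable_cos
  have hgb : ∀ φ ∈ Ioo (-(π/2)) (π/2), |g φ| ≤ 2 * π * E := by
    intro φ hφ
    have h1 : |∫ ψ' in Ioo (-π) π, P φ ψ'| ≤ 2 * π * E := by
      rw [← int_psi]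
      refine (abs_integral_le_integral_abs).trans ?_
      exact aux_bound measurableSet_Ioo (intOn_const _ _ _) (fun _ _ => abs_nonneg _)
        (fun ψ hψ => hE φ hφ ψ hψ)
    rw [hg]; dsimp only
    rw [abs_mul]
    calc _ ≤ 2 * π * E * 1 := mul_le_mul h1 (Real.abs_cos_le_one _) (abs_nonneg _) (by positivity)
      _ = _ := by ring
  have hae : ∀ᵐ φ ∂(volume.restrict (Ioo (-(π/2)) (π/2))), ‖g φ‖ ≤ 2 * π * E :=
    (ae_restrict_iff' measurableSet_Ioo).2 (Filter.Eventually.of_forall hgb)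
  have hgi : IntegrableOn g (Ioo (-(π/2)) (π/2)) :=
    Integrable.mono' (intOn_const _ _ (2 * π * E)) hgm.aestronglyMeasurable hae
  have hwgb : ∀ φ ∈ Ioo (-(π/2)) (π/2), |χ (ε⁻¹ * φ) * g φ| ≤ 2 * π * E * χ (ε⁻¹ * φ) := by
    intro φ hφ
    rw [abs_mul, abs_of_nonneg (hχ.2.1 _).1, mul_comm]
    exact mul_le_mul_of_nonneg_right (hgb φ hφ) (hχ.2.1 _).1
  have hwi := w_int χ hχ ε
  have hwm : Measurable (fun φ => χ (ε⁻¹ * φ)) :=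
    hχ.1.continuous.measurable.comp (by fun_prop)
  have hwgi : IntegrableOn (fun φ => χ (ε⁻¹ * φ) * g φ) (Ioo (-(π/2)) (π/2)) :=
    Integrable.mono' (hwi.const_mul (2 * π * E)) (hwm.mul hgm).aestronglyMeasurable
      ((ae_restrict_iff' measurableSet_Ioo).2 (Filter.Eventually.of_forall hwgb))
  simp_rw [e1, e2]
  rw [integral_const_mul, integral_sub hgi hwgi]
  set G := ∫ φ in Ioo (-(π/2)) (π/2), g φ
  set W := ∫ φ in Ioo (-(π/2)) (π/2), χ (ε⁻¹ * φ) * g φ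
  have hG : |G| ≤ π * (2 * π * E) := by
    rw [← int_phi]
    refine (abs_integral_le_integral_abs).trans ?_
    exact aux_bound measurableSet_Ioo (intOn_const _ _ _) (fun _ _ => abs_nonneg _) hgb
  have hW : |W| ≤ 2 * π * E * (4 * ε) := by
    refine (abs_integral_le_integral_abs).trans ?_
    refine (aux_bound measurableSet_Ioo (hwi.const_mul (2 * π * E))
      (fun _ _ => abs_nonneg _) hwgb).trans ?_
    rw [integral_const_mul]
    exact mul_le_mul_of_nonneg_left (w_bound χ hχ ε hε) (by positivity)
  have hx := hχ.2.1 (ε * η)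
  have hw := hχ.2.1 (ε⁻¹ * φ)
  set x := χ (ε * η)
  set w := χ (ε⁻¹ * φ)
  have key : ε⁻¹ * ((4*π)⁻¹ * (x * (G - W)) - (4*π)⁻¹ * G * (1 - w) * x)
      = (ε⁻¹ * (4*π)⁻¹) * (x * (w * G - W)) := by ring
  rw [key, abs_mul, abs_of_pos (by positivity : 0 < ε⁻¹ * (4*π)⁻¹), abs_mul, abs_of_nonneg hx.1]
  have h1 : |w * G - W| ≤ w * (π * (2 * π * E)) + 2 * π * E * (4 * ε) := by
    refine (abs_sub _ _).trans (add_le_add ?_ hW)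
    rw [abs_mul, abs_of_nonneg hw.1]
    exact mul_le_mul_of_nonneg_left hG hw.1
  have h2 : x * |w * G - W| ≤ w * (π * (2 * π * E)) + 2 * π * E * (4 * ε) :=
    (mul_le_of_le_one_left (abs_nonneg _) hx.2).trans h1
  calc _ ≤ (ε⁻¹ * (4*π)⁻¹) * (w * (π * (2 * π * E)) + 2 * π * E * (4 * ε)) :=
        mul_le_mul_of_nonneg_left h2 (by positivity)
    _ = E * (π / 2 * (ε⁻¹ * w) + 2) := by field_simp; ring
    _ ≤ _ := by
        apply mul_le_mul_of_nonneg_left _ hE0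
        have : π / 2 * (ε⁻¹ * w) ≤ 2 * (ε⁻¹ * w) :=
          mul_le_mul_of_nonneg_right (by linarith [Real.pi_le_four])
            (mul_nonneg (by positivity) hw.1)
        linarith

lemma wt (K : ℝ) (hK : 0 < K) (η : ℝ) (hη : 0 < η) :
    (1+η)^2 * (Real.exp (-K * η))^2 ≤ (1+2/K)^2 * Real.exp (-K * η) := by
  have h : 1 + η ≤ (1+2/K) * Real.exp (K * η / 2) := by
    have h1 := Real.add_one_le_exp (K * η / 2)
    calc 1 + η ≤ (1+2/K) * (K * η / 2 + 1) := by
          have : (1+2/K) * (K * η / 2 + 1) = 1 + η + K * η / 2 + 2 / K := by field_simp; ring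
          rw [this]
          have : 0 ≤ K * η / 2 + 2 / K := by positivity
          linarith
      _ ≤ _ := mul_le_mul_of_nonneg_left h1 (by positivity)
  have h2 : (1+η)^2 ≤ (1+2/K)^2 * Real.exp (K * η) := by
    calc (1+η)^2 ≤ ((1+2/K) * Real.exp (K * η / 2))^2 := pow_le_pow_left₀ (by linarith) h 2
      _ = _ := by rw [mul_pow, ← Real.exp_nat_mul]; congr 2; push_cast; ring
  calc _ ≤ (1+2/K)^2 * Real.exp (K * η) * (Real.exp (-K * η))^2 :=
        mul_le_mul_of_nonneg_right h2 (by positivity)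
    _ = _ := by
        rw [mul_assoc, ← Real.exp_nat_mul, ← Real.exp_add]; congr 2; push_cast; ring

lemma expint (K : ℝ) (hK : 0 < K) :
    IntegrableOn (fun η => Real.exp (-K * η)) (Ioi 0) ∧
    ∫ η in Ioi (0:ℝ), Real.exp (-K * η) = 1 / K := by
  refine ⟨integrableOn_exp_mul_Ioi (by linarith) 0, ?_⟩
  rw [integral_exp_mul_Ioi (by linarith)]
  simp

/-- Bounds for the averaged source term `S₃`: weighted `L²` bound of
order `1` and weighted `L²_ηL¹_w` bound of order `ε^{1/2}`. -/
theorem s3_bounds (χ : ℝ → ℝ) (hχ : IsCutoff χ) (K : ℝ) (hK : 0 < K) :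
    ∃ C > (0:ℝ), ∀ ε ∈ Ioo (0:ℝ) 1, ∀ Ψ : ℝ → ℝ → ℝ → ℝ,
      Measurable (fun p : ℝ × ℝ × ℝ => Ψ p.1 p.2.1 p.2.2) →
      (∀ η ≥ (0:ℝ), ∀ φ ∈ Ioo (-(π/2)) (π/2), ∀ ψ ∈ Ioo (-π) π,
        |Ψ η φ ψ| ≤ Real.exp (-K * η)) →
      ∀ S₃ : ℝ → ℝ → ℝ → ℝ,
      (∀ η φ ψ : ℝ, S₃ η φ ψ =
        ε⁻¹ * ((4*π)⁻¹ * (∫ φ' in Ioo (-(π/2)) (π/2), ∫ ψ' in Ioo (-π) π,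
            (1 - χ (ε⁻¹ * φ')) * χ (ε * η) * Ψ η φ' ψ' * Real.cos φ')
          - ((4*π)⁻¹ * ∫ φ' in Ioo (-(π/2)) (π/2), ∫ ψ' in Ioo (-π) π,
              Ψ η φ' ψ' * Real.cos φ') * (1 - χ (ε⁻¹ * φ)) * χ (ε * η))) →
      Real.sqrt (ε * ∫ η in Ioi (0:ℝ), ∫ φ in Ioo (-(π/2)) (π/2), ∫ ψ in Ioo (-π) π,
          (1+η)^2 * (S₃ η φ ψ)^2 * Real.cos φ) ≤ C ∧
      Real.sqrt (ε * ∫ η in Ioi (0:ℝ), (1+η)^2 * (∫ φ in Ioo (-(π/2)) (π/2),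
          ∫ ψ in Ioo (-π) π, |S₃ η φ ψ| * Real.cos φ)^2) ≤ C * Real.sqrt ε := by
  classical
  have hpi := Real.pi_pos
  obtain ⟨hei, hev⟩ := expint K hK
  set D := (1+2/K)^2 with hD
  have hD0 : 0 < D := by positivity
  set B1 := 2 * π * D * (32 + 8 * π) * (1 / K) with hB1
  set B2 := (2 * π * (8 + 2 * π))^2 * D * (1 / K) with hB2
  refine ⟨√B1 + √B2 + 1, by positivity, ?_⟩
  intro ε hε Ψ hΨ hb S₃ hS
  obtain ⟨hε0, hε1⟩ := hε
  have hpt : ∀ η > 0, ∀ φ ψ, |S₃ η φ ψ| ≤ Real.exp (-K * η) * (2 * ε⁻¹ * χ (ε⁻¹ * φ) + 2) := by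
    intro η hη φ ψ
    rw [hS]
    exact s3_pt χ hχ ε hε0 _ η (Ψ η)
      (hΨ.comp (measurable_const.prodMk measurable_id)) (hb η hη.le) (Real.exp_pos _).le φ
  have hwi := w_int χ hχ ε
  have hwb := w_bound χ hχ ε hε0
  have hcos : ∀ φ ∈ Ioo (-(π/2)) (π/2), 0 ≤ Real.cos φ := fun φ hφ =>
    (Real.cos_pos_of_mem_Ioo hφ).le
  have hiε : 0 < ε⁻¹ := inv_pos.2 hε0
  constructor
  · have hin : ∀ η ∈ Ioi (0:ℝ), ∫ φ in Ioo (-(π/2)) (π/2), ∫ ψ in Ioo (-π) π,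
          (1+η)^2 * (S₃ η φ ψ)^2 * Real.cos φ
          ≤ (2 * π * D * (32 * ε⁻¹ + 8 * π)) * Real.exp (-K * η) := by
      intro η hη
      have hη : 0 < η := hη
      set A := D * Real.exp (-K * η) with hA
      have hA0 : 0 < A := by positivity
      have hp : ∀ φ ∈ Ioo (-(π/2)) (π/2), ∀ ψ, (1+η)^2 * (S₃ η φ ψ)^2 * Real.cos φ
          ≤ A * (8 * ε⁻¹^2 * χ (ε⁻¹ * φ) + 8) := by
        intro φ hφ ψ
        have hw := hχ.2.1 (ε⁻¹ * φ)
        set w := χ (ε⁻¹ * φ)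
        have hw0 := hw.1
        have h1 : (S₃ η φ ψ)^2 ≤ (Real.exp (-K * η))^2 * (8 * ε⁻¹^2 * w + 8) := by
          rw [← sq_abs]
          calc _ ≤ (Real.exp (-K * η) * (2 * ε⁻¹ * w + 2))^2 :=
                pow_le_pow_left₀ (abs_nonneg _) (hpt η hη φ ψ) 2
            _ = (Real.exp (-K * η))^2 * (2 * ε⁻¹ * w + 2)^2 := by ring
            _ ≤ _ := by
              apply mul_le_mul_of_nonneg_left _ (by positivity)
              have hww : ε⁻¹^2 * (w * w) ≤ ε⁻¹^2 * w :=
                mul_le_mul_of_nonneg_left (mul_le_of_le_one_left hw.1 hw.2) (by positivity)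
              nlinarith [sq_nonneg (ε⁻¹ * w - 1)]
        have h2 : (1+η)^2 * (S₃ η φ ψ)^2 ≤ A * (8 * ε⁻¹^2 * w + 8) := by
          calc _ ≤ (1+η)^2 * ((Real.exp (-K * η))^2 * (8 * ε⁻¹^2 * w + 8)) :=
                mul_le_mul_of_nonneg_left h1 (by positivity)
            _ = ((1+η)^2 * (Real.exp (-K * η))^2) * (8 * ε⁻¹^2 * w + 8) := by ring
            _ ≤ _ := mul_le_mul_of_nonneg_right (wt K hK η hη) (by positivity)
        exact (mul_le_of_le_one_right (by positivity) (Real.cos_le_one _)).trans h2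
      calc _ ≤ ∫ φ in Ioo (-(π/2)) (π/2), (2 * π * A * 8 * ε⁻¹^2 * χ (ε⁻¹ * φ) + 2 * π * A * 8) := by
            apply aux_bound measurableSet_Ioo
            · exact (hwi.const_mul _).add (intOn_const _ _ _)
            · intro φ hφ
              exact setIntegral_nonneg measurableSet_Ioo
                (fun ψ _ => mul_nonneg (by positivity) (hcos φ hφ))
            · intro φ hφ
              refine (aux_bound measurableSet_Ioo (intOn_const _ _ _)
                (fun ψ _ => mul_nonneg (by positivity) (hcos φ hφ))
                (fun ψ _ => hp φ hφ ψ)).trans ?_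
              rw [int_psi]
              apply le_of_eq; ring
        _ = 2 * π * A * 8 * ε⁻¹^2 * (∫ φ in Ioo (-(π/2)) (π/2), χ (ε⁻¹ * φ))
              + π * (2 * π * A * 8) := by
            rw [integral_add (hwi.const_mul _) (intOn_const _ _ _), integral_const_mul, int_phi]
        _ ≤ 2 * π * A * 8 * ε⁻¹^2 * (4 * ε) + π * (2 * π * A * 8) := by gcongr
        _ = _ := by rw [hA]; field_simp; ring
    have hout : ∫ η in Ioi (0:ℝ), ∫ φ in Ioo (-(π/2)) (π/2), ∫ ψ in Ioo (-π) π,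
          (1+η)^2 * (S₃ η φ ψ)^2 * Real.cos φ
          ≤ (2 * π * D * (32 * ε⁻¹ + 8 * π)) * (1 / K) := by
      refine (aux_bound measurableSet_Ioi (hei.const_mul _) ?_ hin).trans ?_
      · intro η _
        refine setIntegral_nonneg measurableSet_Ioo (fun φ hφ => ?_)
        exact setIntegral_nonneg measurableSet_Ioo
                (fun ψ _ => mul_nonneg (by positivity) (hcos φ hφ))
      · rw [integral_const_mul, hev]
    have hfin : ε * ∫ η in Ioi (0:ℝ), ∫ φ in Ioo (-(π/2)) (π/2), ∫ ψ in Ioo (-π) π,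
          (1+η)^2 * (S₃ η φ ψ)^2 * Real.cos φ ≤ B1 := by
      refine (mul_le_mul_of_nonneg_left hout hε0.le).trans ?_
      calc _ = 2 * π * D * (32 * (ε * ε⁻¹) + 8 * π * ε) * (1 / K) := by ring
        _ ≤ 2 * π * D * (32 * 1 + 8 * π * 1) * (1 / K) := by
            rw [mul_inv_cancel₀ hε0.ne']; gcongr
        _ = B1 := by rw [hB1]; ring
    have := Real.sqrt_le_sqrt hfin
    have := Real.sqrt_nonneg B2
    linarith
  · have hin : ∀ η ∈ Ioi (0:ℝ), (1+η)^2 * (∫ φ in Ioo (-(π/2)) (π/2),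
          ∫ ψ in Ioo (-π) π, |S₃ η φ ψ| * Real.cos φ)^2
          ≤ ((2 * π * (8 + 2 * π))^2 * D) * Real.exp (-K * η) := by
      intro η hη
      have hη : 0 < η := hη
      set e := Real.exp (-K * η) with he
      have he0 : 0 < e := Real.exp_pos _
      have hn : ∀ φ ∈ Ioo (-(π/2)) (π/2), 0 ≤ ∫ ψ in Ioo (-π) π, |S₃ η φ ψ| * Real.cos φ :=
        fun φ hφ => setIntegral_nonneg measurableSet_Ioo
                (fun ψ _ => mul_nonneg (abs_nonneg _) (hcos φ hφ))
      have h1 : ∫ φ in Ioo (-(π/2)) (π/2),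
          ∫ ψ in Ioo (-π) π, |S₃ η φ ψ| * Real.cos φ ≤ 2 * π * (8 + 2 * π) * e := by
        calc _ ≤ ∫ φ in Ioo (-(π/2)) (π/2), (2 * π * e * 2 * ε⁻¹ * χ (ε⁻¹ * φ) + 2 * π * e * 2) := by
              apply aux_bound measurableSet_Ioo
              · exact (hwi.const_mul _).add (intOn_const _ _ _)
              · exact hn
              · intro φ hφ
                refine (aux_bound measurableSet_Ioo (intOn_const _ _ _)
                  (fun ψ _ => mul_nonneg (abs_nonneg _) (hcos φ hφ))
                  (fun ψ _ => (mul_le_of_le_one_right (abs_nonneg _)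
                    (Real.cos_le_one _)).trans (hpt η hη φ ψ))).trans ?_
                rw [int_psi]
                apply le_of_eq; ring
          _ = 2 * π * e * 2 * ε⁻¹ * (∫ φ in Ioo (-(π/2)) (π/2), χ (ε⁻¹ * φ))
              + π * (2 * π * e * 2) := by
            rw [integral_add (hwi.const_mul _) (intOn_const _ _ _), integral_const_mul, int_phi]
          _ ≤ 2 * π * e * 2 * ε⁻¹ * (4 * ε) + π * (2 * π * e * 2) := by gcongr
          _ = _ := by field_simp; ring
      have h0 := setIntegral_nonneg (μ := volume) measurableSet_Ioo hn
      calc _ ≤ (1+η)^2 * (2 * π * (8 + 2 * π) * e)^2 := by gcongr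
        _ = (2 * π * (8 + 2 * π))^2 * ((1+η)^2 * e^2) := by ring
        _ ≤ (2 * π * (8 + 2 * π))^2 * (D * e) :=
            mul_le_mul_of_nonneg_left (wt K hK η hη) (by positivity)
        _ = _ := by ring
    have hout : ∫ η in Ioi (0:ℝ), (1+η)^2 * (∫ φ in Ioo (-(π/2)) (π/2),
          ∫ ψ in Ioo (-π) π, |S₃ η φ ψ| * Real.cos φ)^2 ≤ B2 := by
      refine (aux_bound measurableSet_Ioi (hei.const_mul _) ?_ hin).trans ?_
      · intro η _
        positivity
      · rw [integral_const_mul, hev]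
    calc _ ≤ √(B2 * ε) := by
          apply Real.sqrt_le_sqrt
          rw [mul_comm]
          exact mul_le_mul_of_nonneg_right hout hε0.le
      _ = √B2 * √ε := Real.sqrt_mul (by positivity) _
      _ ≤ _ := by
          apply mul_le_mul_of_nonneg_right _ (Real.sqrt_nonneg _)
          linarith [Real.sqrt_nonneg B1]
end
end
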